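/- Let A := (P*P)^{-1/2}, let Π := P ∘ (P*P)⁻¹ ∘ P* be the orthogonal projection of K onto the range of P, and for t ∈ ℝ define Ṽ(t) := P ∘ A ∘ U(t) ∘ A ∘ P* : K → K. Then: (1) Ṽ(t) ∘ Ṽ(t)* = Π for every t ∈ ℝ; (2) Ṽ(t) ∘ Ṽ(s) = Ṽ(t+s) for all t, s ∈ ℝ; and (3) if φ ∈ H and λ ∈ ℝ satisfy U(t) φ = e^{i t λ} φ for all t, then Ṽ(t) (P (A φ)) = e^{i t λ} (P (A φ)) for all t ∈ ℝ. -/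

import Mathlib

/-!
Since `A² = (P*P)⁻¹`, the operator `A P*P` is a right inverse of `A` and `P*P A` a left inverse, so
they agree and `A P*P A = 1`. Equivalently `W = P A` is an isometry `H → K`, and
`V t = W (U t) W*` (as `A* = A`) is the transport of the unitary group `U` along `W`: the inner
factors `W* W` cancel in every product, and `W W* = P A² P* = P (P*P)⁻¹ P*`.
-/

open ContinuousLinearMap
open scoped InnerProductSpace

/-- Abstract form of the paper's Proposition that the modified wave group
`Ṽ_τ^t = P^τ A_τ U^t A_τ P^{τ*}` on `O⁰(∂M_τ)` is a unitary group:
`Ṽ(t) Ṽ(t)* = Π` (the orthogonal projection `P (P*P)⁻¹ P*` onto the range of `P`),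
`Ṽ(t) Ṽ(s) = Ṽ(t+s)`, and it has eigenfunctions
`Ṽ(t) (P A φ) = e^{itλ} (P A φ)` whenever `U t φ = e^{itλ} φ` for all `t`. -/
theorem modified_wave_group_unitary
    {H K : Type*} [NormedAddCommGroup H] [InnerProductSpace ℂ H] [CompleteSpace H]
    [NormedAddCommGroup K] [InnerProductSpace ℂ K] [CompleteSpace K]
    (P : H →L[ℂ] K) (c : ℝ) (hc : 0 < c) (hbelow : ∀ x : H, c * ‖x‖ ≤ ‖P x‖)
    (Q : H →L[ℂ] H)
    (hQ1 : Q ∘L (adjoint P ∘L P) = ContinuousLinearMap.id ℂ H)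
    (hQ2 : (adjoint P ∘L P) ∘L Q = ContinuousLinearMap.id ℂ H)
    (A : H →L[ℂ] H) (hApos : A.IsPositive) (hAsq : A ∘L A = Q)
    (U : ℝ → (H →L[ℂ] H))
    (hUiso : ∀ (t : ℝ) (x : H), ‖U t x‖ = ‖x‖)
    (hU0 : U 0 = ContinuousLinearMap.id ℂ H)
    (hUadd : ∀ t s : ℝ, U (t + s) = U t ∘L U s)
    (hUadj : ∀ t : ℝ, adjoint (U t) = U (-t)) :
    let V : ℝ → (K →L[ℂ] K) := fun t => P ∘L A ∘L U t ∘L A ∘L adjoint P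
    let Proj : K →L[ℂ] K := P ∘L (Q ∘L adjoint P)
    (∀ t : ℝ, V t ∘L adjoint (V t) = Proj) ∧
    (∀ t s : ℝ, V t ∘L V s = V (t + s)) ∧
    (∀ (φ : H) (lam : ℝ),
      (∀ t : ℝ, U t φ = Complex.exp (Complex.I * t * lam) • φ) →
      ∀ t : ℝ, V t (P (A φ)) = Complex.exp (Complex.I * t * lam) • P (A φ)) := by
  intro V Proj
  have hAadj : adjoint A = A := hApos.isSelfAdjoint.adjoint_eq
  have hcomm : (adjoint P ∘L P) ∘L A = A ∘L (adjoint P ∘L P) := by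
    refine left_inv_eq_right_inv (a := A) (b := (adjoint P ∘L P) ∘L A)
      (c := A ∘L (adjoint P ∘L P)) ?_ ?_
    · change ((adjoint P ∘L P) ∘L A) ∘L A = ContinuousLinearMap.id ℂ H
      rw [ContinuousLinearMap.comp_assoc, hAsq, hQ2]
    · change A ∘L (A ∘L (adjoint P ∘L P)) = ContinuousLinearMap.id ℂ H
      rw [← ContinuousLinearMap.comp_assoc, hAsq, hQ1]
  have hW : ∀ x : H, A (adjoint P (P (A x))) = x := by
    intro x
    have h : (A ∘L (adjoint P ∘L P)) ∘L A = ContinuousLinearMap.id ℂ H := by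
      rw [← hcomm, ContinuousLinearMap.comp_assoc, hAsq, hQ2]
    exact DFunLike.congr_fun h x
  have hVadd : ∀ t s : ℝ, V t ∘L V s = V (t + s) := by
    intro t s
    ext x
    simp [V, hUadd, hW]
  have hVadj : ∀ t : ℝ, adjoint (V t) = V (-t) := by
    intro t
    simp only [V, adjoint_comp, hAadj, hUadj, adjoint_adjoint, ContinuousLinearMap.comp_assoc]
  refine ⟨fun t => ?_, hVadd, fun φ lam hφ t => ?_⟩
  · rw [hVadj, hVadd, add_neg_cancel]
    ext x
    simp [V, Proj, hU0, ← hAsq]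
  · simp [V, hW, hφ]
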